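/- Let (Y, d) be a metric space equipped with a measure μ, let y_C ∈ Y, let Y_C ⊆ Y be a measurable set, let X be a set of prompts, let p : X × Y → ℝ be measurable in y with p(x, ·) ≥ 0 and ∫_Y p(x, y) dμ(y) = 1 for every x ∈ X, let ρ : X × Y → ℝ be measurable in y, and let k : X → ℝ. Fix η > 0, δ > 0 and define X̃ = {x ∈ X : p(x, y_C) ≥ η and ρ(x, y_C) < k(x) − δ}. Assume: (i) there exist ε_p > 0 and α > 0 such that for every x ∈ X and every y with d(y_C, y) < ε_p, |p(x, y_C) − p(x, y)| ≤ α · d(y_C, y); (ii) there exist ε̃ > 0 and β > 0 such that for every x ∈ X and every y with d(y_C, y) < ε̃, |ρ(x, y_C) − ρ(x, y)| ≤ β · d(y_C, y); (iii) there exists ε_c > 0 with {y : d(y_C, y) < ε_c} ⊆ Y_C. Set ε = min(ε_p, ε_c, ε̃, δ/β), and let B = {y : d(y_C, y) < ε}, C₁ = μ(B), C₂ = ∫_B d(y_C, y) dμ(y), assuming C₁ < ∞ and C₂ < ∞. Then for every x ∈ X̃ with ∫_Y 1_{ρ(x,y) < k(x)} p(x, y) dμ(y) > 0, the conditional probability (∫_Y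 1_{y ∈ Y_C} · 1_{ρ(x,y) < k(x)} · p(x, y) dμ(y)) / (∫_Y 1_{ρ(x,y) < k(x)} p(x, y) dμ(y)) ≥ η C₁ − α C₂. In particular sup_{x ∈ X} of this conditional probability is at least sup_{x ∈ X̃} (η C₁ − α C₂). -/

import Mathlib

open MeasureTheory

/-- **Theorem 2 (Anti-NAF lower bound).** For the CP-k protected model (the
density `p (x, ·)` conditioned on the acceptance event `{y | ρ x y < k x}`),
every adversarial prompt `x ∈ X̃` (density at the target at least `η`, score at
the target below the threshold by a margin `δ`) yields infringement probability
at least `η * C₁ - α * C₂`; in particular the supremum over all prompts of the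
infringement probability is at least this value. -/
theorem anti_naf_infringement_lower_bound
    {Y : Type*} [MetricSpace Y] [MeasurableSpace Y] [OpensMeasurableSpace Y]
    (μ : Measure Y) (y_C : Y) (Y_C : Set Y) (hY_C : MeasurableSet Y_C)
    {X : Type*}
    (p : X → Y → ℝ) (hp_meas : ∀ x, Measurable (p x))
    (hp_nonneg : ∀ x y, 0 ≤ p x y)
    (hp_int : ∀ x, ∫ y, p x y ∂μ = 1)
    (ρ : X → Y → ℝ) (hρ_meas : ∀ x, Measurable (ρ x))
    (k : X → ℝ)
    (η δ : ℝ) (hη : 0 < η) (hδ : 0 < δ)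
    (ε_p α : ℝ) (hε_p : 0 < ε_p) (hα : 0 < α)
    (hp_loc : ∀ x, ∀ y, dist y_C y < ε_p → |p x y_C - p x y| ≤ α * dist y_C y)
    (ε_t β : ℝ) (hε_t : 0 < ε_t) (hβ : 0 < β)
    (hρ_loc : ∀ x, ∀ y, dist y_C y < ε_t → |ρ x y_C - ρ x y| ≤ β * dist y_C y)
    (ε_c : ℝ) (hε_c : 0 < ε_c) (hsub : Metric.ball y_C ε_c ⊆ Y_C) :
    let Xt : Set X := {x | η ≤ p x y_C ∧ ρ x y_C < k x - δ}
    let ε : ℝ := min (min ε_p ε_c) (min ε_t (δ / β))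
    let B : Set Y := Metric.ball y_C ε
    let C₁ : ℝ := (μ B).toReal
    let C₂ : ℝ := ∫ y in B, dist y_C y ∂μ
    μ B < ⊤ →
    IntegrableOn (fun y => dist y_C y) B μ →
    ((∀ x ∈ Xt,
        0 < ∫ y in {y | ρ x y < k x}, p x y ∂μ →
        (∫ y in Y_C ∩ {y | ρ x y < k x}, p x y ∂μ)
            / (∫ y in {y | ρ x y < k x}, p x y ∂μ)
          ≥ η * C₁ - α * C₂) ∧
      (∀ x₀ ∈ Xt,
        0 < ∫ y in {y | ρ x₀ y < k x₀}, p x₀ y ∂μ →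
        sSup {r : ℝ | ∃ x : X,
            r = (∫ y in Y_C ∩ {y | ρ x y < k x}, p x y ∂μ)
                  / (∫ y in {y | ρ x y < k x}, p x y ∂μ)}
          ≥ η * C₁ - α * C₂)) := by
  intro Xt ε B C₁ C₂ hB hdist
  have hint : ∀ x, Integrable (p x) μ := by
    intro x
    by_contra h
    have h1 := hp_int x
    rw [integral_undef h] at h1
    exact zero_ne_one h1
  have hA : ∀ x, MeasurableSet {y | ρ x y < k x} := fun x =>
    measurableSet_lt (hρ_meas x) measurable_const
  have key : ∀ x ∈ Xt,
      0 < ∫ y in {y | ρ x y < k x}, p x y ∂μ →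
      (∫ y in Y_C ∩ {y | ρ x y < k x}, p x y ∂μ)
          / (∫ y in {y | ρ x y < k x}, p x y ∂μ)
        ≥ η * C₁ - α * C₂ := by
    intro x hx hpos
    obtain ⟨hx1, hx2⟩ := hx
    have hD : ∫ y in {y | ρ x y < k x}, p x y ∂μ ≤ 1 := by
      rw [← hp_int x]
      exact setIntegral_le_integral (hint x) (Filter.Eventually.of_forall (hp_nonneg x))
    have hN : 0 ≤ ∫ y in Y_C ∩ {y | ρ x y < k x}, p x y ∂μ :=
      integral_nonneg (hp_nonneg x)
    have hBsub : B ⊆ Y_C ∩ {y | ρ x y < k x} := by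
      intro y hy
      have hy' : dist y_C y < ε := by
        rw [dist_comm]; exact hy
      simp only [ε, lt_min_iff] at hy'
      obtain ⟨⟨_, h2⟩, h3, h4⟩ := hy'
      refine ⟨hsub (by rw [Metric.mem_ball, dist_comm]; exact h2), ?_⟩
      have h5 := abs_le.mp (hρ_loc x y h3)
      rw [lt_div_iff₀ hβ] at h4
      show ρ x y < k x
      linarith [h5.1]
    have h1 : ∫ y in B, p x y ∂μ ≤ ∫ y in Y_C ∩ {y | ρ x y < k x}, p x y ∂μ :=
      setIntegral_mono_set (hint x).integrableOn
        (Filter.Eventually.of_forall (hp_nonneg x)) hBsub.eventuallyLE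
    have hc : IntegrableOn (fun _ : Y => η) B μ := integrableOn_const hB.ne
    have h2 : ∫ y in B, (η - α * dist y_C y) ∂μ ≤ ∫ y in B, p x y ∂μ := by
      refine setIntegral_mono_on (hc.sub (hdist.const_mul α)) (hint x).integrableOn
        Metric.isOpen_ball.measurableSet ?_
      intro y hy
      have hy' : dist y_C y < ε := by
        rw [dist_comm]; exact hy
      simp only [ε, lt_min_iff] at hy'
      have h5 := abs_le.mp (hp_loc x y hy'.1.1)
      linarith [h5.2]
    have h3 : ∫ y in B, (η - α * dist y_C y) ∂μ = η * C₁ - α * C₂ := by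
      rw [integral_sub hc (hdist.const_mul α), integral_const_mul, setIntegral_const]
      simp only [C₁, C₂, smul_eq_mul, Measure.real]
      ring
    have h4 := le_div_self hN hpos hD
    linarith
  refine ⟨key, fun x₀ hx₀ hpos => ?_⟩
  refine (key x₀ hx₀ hpos).le.trans (le_csSup ⟨1, ?_⟩ ⟨x₀, rfl⟩)
  rintro r ⟨x, rfl⟩
  refine div_le_one_of_le₀ ?_ (integral_nonneg (hp_nonneg x))
  exact setIntegral_mono_set (hint x).integrableOn
    (Filter.Eventually.of_forall (hp_nonneg x)) Set.inter_subset_right.eventuallyLE
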